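/- There exist constants ε₀, ν₀ ∈ (0,1) and C > 0, independent of ν, k, λ and ε, such that for every 0 < ν ≤ ν₀, every 0 < ε ≤ ε₀, every k = (k₁,k₃) ∈ ℤ² with |k₁| ≥ 1, every λ ∈ ℝ, every F₁ ∈ L²(I), and every solution w ∈ H¹₀(I) ∩ H²(I) of −ν(∂_y² − |k|²)w + i k₁(1−y²−λ)w − ε(ν|k₁|)^{1/2} w = F₁ on I with w(±1) = 0, one has ν ‖(∂_y,|k|)w‖_{L²} + ν^{3/4}|k₁|^{1/4} ‖w‖_{L²} ≤ C ‖F₁‖_{H⁻¹_k}. -/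

import Mathlib

open Real MeasureTheory

noncomputable section

/-- `|k| = sqrt (k₁² + k₃²)` for `k = (k₁,k₃) ∈ ℤ²`. -/
def kabs (k₁ k₃ : ℤ) : ℝ := Real.sqrt ((k₁ : ℝ) ^ 2 + (k₃ : ℝ) ^ 2)

/-- The `L²` norm on the interval `(-1,1)`. -/
def l2 (f : ℝ → ℂ) : ℝ := Real.sqrt (∫ y in (-1:ℝ)..1, ‖f y‖ ^ 2)

/-- `‖g‖_{H¹_k} = (‖g'‖² + |k|²‖g‖²)^{1/2}`. -/
def hk (k₁ k₃ : ℤ) (f : ℝ → ℂ) : ℝ :=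
  Real.sqrt ((∫ y in (-1:ℝ)..1, ‖deriv f y‖ ^ 2) +
    (kabs k₁ k₃) ^ 2 * ∫ y in (-1:ℝ)..1, ‖f y‖ ^ 2)

/-- The dual norm `‖F‖_{H⁻¹_k} = sup { |∫ F ḡ| : g ∈ H¹₀, ‖g‖_{H¹_k} ≤ 1 }`. -/
def hm1 (k₁ k₃ : ℤ) (F : ℝ → ℂ) : ℝ :=
  sSup { r : ℝ | ∃ g : ℝ → ℂ, ContDiff ℝ 1 g ∧ g (-1) = 0 ∧ g 1 = 0 ∧
      hk k₁ k₃ g ≤ 1 ∧ r = ‖∫ y in (-1:ℝ)..1, F y * (starRingEnd ℂ) (g y)‖ }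

/-- The Orr–Sommerfeld equation without nonlocal term:
`-ν(∂_y²-|k|²)w + ik₁(1-y²-λ)w - ε(ν|k₁|)^{1/2}w = F₁` on `[-1,1]`,
with `w(±1) = 0`. -/
def OSlocal (ν : ℝ) (k₁ k₃ : ℤ) (lam ε : ℝ) (w F : ℝ → ℂ) : Prop :=
  ContDiff ℝ 2 w ∧
  (∀ y ∈ Set.Icc (-1:ℝ) 1,
    -(ν : ℂ) * (deriv (deriv w) y - ((kabs k₁ k₃ : ℝ) : ℂ) ^ 2 * w y) +
      Complex.I * (k₁ : ℂ) * ((1 - (y : ℂ) ^ 2 - (lam : ℂ)) * w y) -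
      ((ε * Real.sqrt (ν * |(k₁ : ℝ)|) : ℝ) : ℂ) * w y = F y) ∧
  w (-1) = 0 ∧ w 1 = 0

/-! Write `a = |k₁|` and `δ = (ν / a)^{1/4}`, the width at which viscosity balances transport at the
critical point of `1 - y²`. The real part of the equation tested against `w` gives the energy bound
`ν‖w‖²_{H¹_k} ≤ ε(νa)^{1/2}‖w‖² + ‖F‖_{H⁻¹_k}‖w‖_{H¹_k}`, so only `‖w‖` is missing.

It comes from the imaginary part of the equation tested against `χw`, where `χ` is the sign of
`c - y²`, `c = 1 - λ`, smoothed at the scale `δ` so that `|χ'| ≤ 3/δ`. This controls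
`∫ (c - y²)χ|w|²`, whose weight is at least `δ²/2` except within `δ` of `0` and `±√c`. In these
layers `|w|²` is absorbed by Lorentzian bumps: they are derivatives of arctangents of size `O(δ)`,
so integration by parts costs only `δ‖w‖‖w'‖`. After rescaling by `δ` the two estimates close for
small `ε`, uniformly in `λ`. -/

open scoped ComplexConjugate Topology

theorem integral_deriv_mul_norm_sq_le {E : Type*} [NormedAddCommGroup E] [InnerProductSpace ℝ E]
    {a b K : ℝ} {Φ φ : ℝ → ℝ} {w : ℝ → E} (hab : a ≤ b) (hΦ : ∀ y, HasDerivAt Φ (φ y) y)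
    (hφ : Continuous φ) (hK : ∀ y, |Φ y| ≤ K) (hw : ContDiff ℝ 1 w) (ha : w a = 0)
    (hb : w b = 0) :
    ∫ y in a..b, φ y * ‖w y‖ ^ 2 ≤ 2 * K * ∫ y in a..b, ‖w y‖ * ‖deriv w y‖ := by
  have cw := hw.continuous
  have cw' : Continuous (deriv w) := hw.continuous_deriv le_rfl
  have hint : IntervalIntegrable (fun y ↦ 2 * K * (‖w y‖ * ‖deriv w y‖)) volume a b :=
    Continuous.intervalIntegrable (by fun_prop) _ _
  have parts : ∫ y in a..b, ‖w y‖ ^ 2 * φ y =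
      -∫ y in a..b, 2 * inner ℝ (w y) (deriv w y) * Φ y := by
    rw [intervalIntegral.integral_mul_deriv_eq_deriv_mul
      (fun y _ ↦ (hw.differentiable one_ne_zero y).hasDerivAt.norm_sq) (fun y _ ↦ hΦ y)
      ((continuous_const.mul (cw.inner cw')).intervalIntegrable _ _) (hφ.intervalIntegrable _ _)]
    simp [ha, hb]
  calc ∫ y in a..b, φ y * ‖w y‖ ^ 2
      = -∫ y in a..b, 2 * inner ℝ (w y) (deriv w y) * Φ y := by simp_rw [← parts, mul_comm]
    _ ≤ ∫ y in a..b, 2 * K * (‖w y‖ * ‖deriv w y‖) := by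
        refine (neg_le_abs _).trans ?_
        rw [← Real.norm_eq_abs]
        refine intervalIntegral.norm_integral_le_of_norm_le hab (.of_forall fun y _ ↦ ?_) hint
        calc ‖2 * inner ℝ (w y) (deriv w y) * Φ y‖
            = 2 * |inner ℝ (w y) (deriv w y)| * |Φ y| := by simp
          _ ≤ 2 * (‖w y‖ * ‖deriv w y‖) * K := by
              gcongr
              exacts [abs_real_inner_le_norm _ _, hK y]
          _ = 2 * K * (‖w y‖ * ‖deriv w y‖) := by ring
    _ = 2 * K * ∫ y in a..b, ‖w y‖ * ‖deriv w y‖ := intervalIntegral.integral_const_mul _ _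

theorem integral_deriv_mul_conj {a b : ℝ} {v g : ℝ → ℂ} (hv : ContDiff ℝ 1 v)
    (hg : ContDiff ℝ 1 g) (ha : g a = 0) (hb : g b = 0) :
    ∫ y in a..b, deriv v y * conj (g y) = -∫ y in a..b, v y * conj (deriv g y) := by
  have cv := hv.continuous
  have cg := hg.continuous
  have cv' := hv.continuous_deriv le_rfl
  have cg' := hg.continuous_deriv le_rfl
  have parts := intervalIntegral.integral_deriv_mul_eq_sub (a := a) (b := b)
    (fun y _ ↦ (hv.differentiable one_ne_zero y).hasDerivAt)
    (fun y _ ↦ (hg.differentiable one_ne_zero y).hasDerivAt.star)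
    (cv'.intervalIntegrable _ _) (cg'.star.intervalIntegrable _ _)
  rw [intervalIntegral.integral_add (Continuous.intervalIntegrable (by fun_prop) _ _)
    (Continuous.intervalIntegrable (by fun_prop) _ _)] at parts
  exact eq_neg_of_add_eq_zero_left (by simpa [ha, hb] using parts)

theorem integral_real_mul_conj_self {a b : ℝ} (r : ℝ → ℝ) (f : ℝ → ℂ) :
    ∫ y in a..b, (r y : ℂ) * (f y * conj (f y)) = ((∫ y in a..b, r y * ‖f y‖ ^ 2 : ℝ) : ℂ) := by
  rw [← intervalIntegral.integral_ofReal]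
  simp only [Complex.mul_conj', Complex.ofReal_mul, Complex.ofReal_pow]

theorem integral_real_mul_conj_real_mul {a b : ℝ} (r χ : ℝ → ℝ) (f : ℝ → ℂ) :
    ∫ y in a..b, (r y : ℂ) * (f y * conj ((χ y : ℂ) * f y)) =
      ((∫ y in a..b, r y * χ y * ‖f y‖ ^ 2 : ℝ) : ℂ) := by
  rw [← integral_real_mul_conj_self fun y ↦ r y * χ y]
  refine intervalIntegral.integral_congr fun y _ ↦ ?_
  simp only [map_mul, Complex.conj_ofReal, Complex.ofReal_mul]
  ring

theorem deriv_ofReal_mul {χ : ℝ → ℝ} {w : ℝ → ℂ} {y : ℝ} (hχ : DifferentiableAt ℝ χ y)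
    (hw : DifferentiableAt ℝ w y) :
    deriv (fun t ↦ (χ t : ℂ) * w t) y = (deriv χ y : ℝ) * w y + χ y * deriv w y :=
  (hχ.hasDerivAt.ofReal_comp.mul hw.hasDerivAt).deriv

theorem integral_deriv_mul_conj_deriv_ofReal_mul {a b : ℝ} {χ : ℝ → ℝ} {w : ℝ → ℂ}
    (hχ : ContDiff ℝ 1 χ) (hw : ContDiff ℝ 1 w) :
    ∫ y in a..b, deriv w y * conj (deriv (fun t ↦ (χ t : ℂ) * w t) y) =
      (∫ y in a..b, ((deriv χ y : ℝ) : ℂ) * (deriv w y * conj (w y))) +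
      ((∫ y in a..b, χ y * ‖deriv w y‖ ^ 2 : ℝ) : ℂ) := by
  have : Continuous χ := hχ.continuous
  have : Continuous (deriv χ) := hχ.continuous_deriv le_rfl
  have : Continuous w := hw.continuous
  have : Continuous (deriv w) := hw.continuous_deriv le_rfl
  rw [← integral_real_mul_conj_self, ← intervalIntegral.integral_add
    (Continuous.intervalIntegrable (by fun_prop) _ _)
    (Continuous.intervalIntegrable (by fun_prop) _ _)]
  refine intervalIntegral.integral_congr fun y _ ↦ ?_
  simp only [deriv_ofReal_mul (hχ.differentiable one_ne_zero y) (hw.differentiable one_ne_zero y),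
    map_add, map_mul, Complex.conj_ofReal]
  ring

/-! ### The norms `l2`, `hk` and `hm1` -/

theorem l2_nonneg (f : ℝ → ℂ) : 0 ≤ l2 f := Real.sqrt_nonneg _

theorem l2_sq (f : ℝ → ℂ) : l2 f ^ 2 = ∫ y in (-1 : ℝ)..1, ‖f y‖ ^ 2 :=
  Real.sq_sqrt <| intervalIntegral.integral_nonneg (by norm_num) fun _ _ ↦ by positivity

theorem hk_nonneg (k₁ k₃ : ℤ) (f : ℝ → ℂ) : 0 ≤ hk k₁ k₃ f := Real.sqrt_nonneg _

theorem hk_sq (k₁ k₃ : ℤ) (f : ℝ → ℂ) :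
    hk k₁ k₃ f ^ 2 = l2 (deriv f) ^ 2 + kabs k₁ k₃ ^ 2 * l2 f ^ 2 := by
  rw [hk, ← l2_sq, ← l2_sq, Real.sq_sqrt (by positivity)]

theorem l2_deriv_le_hk (k₁ k₃ : ℤ) (f : ℝ → ℂ) : l2 (deriv f) ≤ hk k₁ k₃ f := by
  refine le_of_sq_le_sq ?_ (hk_nonneg _ _ _)
  rw [hk_sq]
  exact le_add_of_nonneg_right (by positivity)

theorem hk_const_mul (k₁ k₃ : ℤ) (c : ℂ) (f : ℝ → ℂ) :
    hk k₁ k₃ (fun y ↦ c * f y) = ‖c‖ * hk k₁ k₃ f := by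
  have hderiv : deriv (fun y ↦ c * f y) = fun y ↦ c * deriv f y :=
    funext fun _ ↦ deriv_const_mul_field _
  rw [hk, hk, hderiv, ← Real.sqrt_sq (norm_nonneg c), ← Real.sqrt_mul (by positivity)]
  simp only [norm_mul, mul_pow, intervalIntegral.integral_const_mul]
  ring_nf

theorem integral_norm_mul_norm_le_l2_mul_l2 {f g : ℝ → ℂ}
    (hf : MemLp f 2 (volume.restrict (Set.Ioc (-1) 1)))
    (hg : MemLp g 2 (volume.restrict (Set.Ioc (-1) 1))) :
    ∫ y in (-1 : ℝ)..1, ‖f y‖ * ‖g y‖ ≤ l2 f * l2 g := by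
  simp only [l2, intervalIntegral.integral_of_le (show (-1 : ℝ) ≤ 1 by norm_num), Real.sqrt_eq_rpow]
  simpa only [Real.rpow_two] using integral_mul_norm_le_Lp_mul_Lq Real.HolderConjugate.two_two
    (by simpa using hf) (by simpa using hg)

theorem memLp_two_restrict_Ioc {E : Type*} [NormedAddCommGroup E] {f : ℝ → E} (hf : Continuous f)
    (a b : ℝ) : MemLp f 2 (volume.restrict (Set.Ioc a b)) :=
  (memLp_two_iff_integrable_sq_norm hf.aestronglyMeasurable).2
    (hf.norm.pow 2).integrableOn_Ioc

theorem norm_le_of_hk_le_one {k₁ k₃ : ℤ} {g : ℝ → ℂ} (hg : ContDiff ℝ 1 g) (hg0 : g (-1) = 0)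
    (hgk : hk k₁ k₃ g ≤ 1) {y : ℝ} (hy : y ∈ Set.Icc (-1) 1) : ‖g y‖ ≤ 3 / 2 := by
  have : Continuous (deriv g) := hg.continuous_deriv le_rfl
  have hint : ∀ a b, IntervalIntegrable (fun t ↦ (1 + ‖deriv g t‖ ^ 2) / 2) volume a b :=
    fun _ _ ↦ Continuous.intervalIntegrable (by fun_prop) _ _
  calc ‖g y‖ = ‖g y - g (-1)‖ := by rw [hg0, sub_zero]
    _ ≤ ∫ t in (-1)..y, (1 + ‖deriv g t‖ ^ 2) / 2 :=
        norm_sub_le_integral_of_norm_deriv_le_of_le hy.1 hg.continuous.continuousOn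
          (hg.differentiable one_ne_zero).differentiableOn
          (.of_forall fun t _ ↦ by nlinarith [sq_nonneg (‖deriv g t‖ - 1)]) (hint _ _)
    _ ≤ ∫ t in (-1)..1, (1 + ‖deriv g t‖ ^ 2) / 2 :=
        intervalIntegral.integral_mono_interval le_rfl hy.1 hy.2
          (.of_forall fun t ↦ by simp only [Pi.zero_apply]; positivity) (hint _ _)
    _ = 1 + l2 (deriv g) ^ 2 / 2 := by
        rw [l2_sq, intervalIntegral.integral_div, intervalIntegral.integral_add (by simp)
          (Continuous.intervalIntegrable (by fun_prop) _ _), intervalIntegral.integral_const]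
        norm_num [add_div]
    _ ≤ 3 / 2 := by
        have := pow_le_one₀ (n := 2) (l2_nonneg _) ((l2_deriv_le_hk k₁ k₃ g).trans hgk)
        linarith

theorem norm_integral_mul_conj_le_hm1 {k₁ k₃ : ℤ} {F g : ℝ → ℂ}
    (hF : IntervalIntegrable F volume (-1) 1) (hg : ContDiff ℝ 1 g) (hg0 : g (-1) = 0)
    (hg1 : g 1 = 0) (hgk : hk k₁ k₃ g ≤ 1) :
    ‖∫ y in (-1 : ℝ)..1, F y * conj (g y)‖ ≤ hm1 k₁ k₃ F := by
  refine le_csSup ⟨∫ y in (-1 : ℝ)..1, ‖F y‖ * (3 / 2), ?_⟩ ⟨g, hg, hg0, hg1, hgk, rfl⟩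
  rintro _ ⟨f, hf, hf0, -, hfk, rfl⟩
  refine intervalIntegral.norm_integral_le_of_norm_le (by norm_num)
    (.of_forall fun y hy ↦ ?_) (hF.norm.mul_const _)
  rw [norm_mul, RCLike.norm_conj]
  gcongr
  exact norm_le_of_hk_le_one hf hf0 hfk (Set.Ioc_subset_Icc_self hy)

theorem hm1_nonneg (k₁ k₃ : ℤ) (F : ℝ → ℂ) : 0 ≤ hm1 k₁ k₃ F :=
  Real.sSup_nonneg <| by rintro _ ⟨_, -, -, -, -, rfl⟩; exact norm_nonneg _

theorem norm_integral_mul_conj_le_hm1_mul_hk {k₁ k₃ : ℤ} {F g : ℝ → ℂ}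
    (hF : IntervalIntegrable F volume (-1) 1) (hg : ContDiff ℝ 1 g) (hg0 : g (-1) = 0)
    (hg1 : g 1 = 0) :
    ‖∫ y in (-1 : ℝ)..1, F y * conj (g y)‖ ≤ hm1 k₁ k₃ F * hk k₁ k₃ g := by
  have scaled : ∀ t > hk k₁ k₃ g, ‖∫ y in (-1 : ℝ)..1, F y * conj (g y)‖ ≤ hm1 k₁ k₃ F * t := by
    intro t ht
    have ht0 : 0 < t := (hk_nonneg _ _ _).trans_lt ht
    have unit := norm_integral_mul_conj_le_hm1 (k₁ := k₁) (k₃ := k₃)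
      (g := fun y ↦ (t⁻¹ : ℂ) * g y) hF (contDiff_const.mul hg) (by simp [hg0]) (by simp [hg1])
      (by rw [hk_const_mul, norm_inv, Complex.norm_of_nonneg ht0.le, inv_mul_le_one₀ ht0]
          exact ht.le)
    have pull : ∫ y in (-1 : ℝ)..1, F y * conj ((t⁻¹ : ℂ) * g y) =
        (t⁻¹ : ℂ) * ∫ y in (-1 : ℝ)..1, F y * conj (g y) := by
      simp only [← intervalIntegral.integral_const_mul, map_mul, map_inv₀, Complex.conj_ofReal,
        mul_left_comm]
    rwa [pull, norm_mul, norm_inv, Complex.norm_of_nonneg ht0.le, inv_mul_le_iff₀ ht0,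
      mul_comm] at unit
  exact ge_of_tendsto (x := 𝓝[>] hk k₁ k₃ g)
    (((continuous_const_mul _).tendsto _).mono_left nhdsWithin_le_nhds)
    (eventually_nhdsWithin_of_forall scaled)

theorem norm_integral_real_mul_deriv_mul_conj_le {ψ : ℝ → ℝ} {w : ℝ → ℂ} {L : ℝ}
    (hw : ContDiff ℝ 1 w) (hψ : ∀ y, |ψ y| ≤ L) :
    ‖∫ y in (-1 : ℝ)..1, (ψ y : ℂ) * (deriv w y * conj (w y))‖ ≤ L * (l2 w * l2 (deriv w)) := by
  have cw : Continuous w := hw.continuous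
  have cw' : Continuous (deriv w) := hw.continuous_deriv le_rfl
  have hL : 0 ≤ L := (abs_nonneg _).trans (hψ 0)
  calc ‖∫ y in (-1 : ℝ)..1, (ψ y : ℂ) * (deriv w y * conj (w y))‖
      ≤ ∫ y in (-1 : ℝ)..1, L * (‖w y‖ * ‖deriv w y‖) := by
        refine intervalIntegral.norm_integral_le_of_norm_le (by norm_num)
          (.of_forall fun y _ ↦ ?_) (Continuous.intervalIntegrable (by fun_prop) _ _)
        rw [norm_mul, norm_mul, RCLike.norm_conj, Complex.norm_real, mul_comm ‖deriv w y‖]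
        gcongr
        exact hψ y
    _ ≤ L * (l2 w * l2 (deriv w)) := by
        rw [intervalIntegral.integral_const_mul]
        gcongr
        exact integral_norm_mul_norm_le_l2_mul_l2 (memLp_two_restrict_Ioc cw _ _)
          (memLp_two_restrict_Ioc cw' _ _)

theorem l2_ofReal_mul_le {χ : ℝ → ℝ} {w : ℝ → ℂ} (hχ : Continuous χ) (hw : Continuous w)
    (hχ_le : ∀ y, |χ y| ≤ 1) : l2 (fun y ↦ (χ y : ℂ) * w y) ≤ l2 w := by
  refine Real.sqrt_le_sqrt <| intervalIntegral.integral_mono_on (by norm_num)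
    (Continuous.intervalIntegrable (by fun_prop) _ _)
    (Continuous.intervalIntegrable (by fun_prop) _ _) fun y _ ↦ ?_
  rw [norm_mul, Complex.norm_real]
  gcongr
  exact mul_le_of_le_one_left (norm_nonneg _) (hχ_le y)

theorem norm_deriv_ofReal_mul_le {L y : ℝ} {χ : ℝ → ℝ} {w : ℝ → ℂ} (hχ : DifferentiableAt ℝ χ y)
    (hw : DifferentiableAt ℝ w y) (hχ_le : |χ y| ≤ 1) (hχ'_le : |deriv χ y| ≤ L) :
    ‖deriv (fun t ↦ (χ t : ℂ) * w t) y‖ ≤ ‖deriv w y‖ + L * ‖w y‖ := by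
  calc ‖deriv (fun t ↦ (χ t : ℂ) * w t) y‖
      ≤ |deriv χ y| * ‖w y‖ + |χ y| * ‖deriv w y‖ := by
        rw [deriv_ofReal_mul hχ hw]
        refine (norm_add_le _ _).trans_eq ?_
        simp only [norm_mul, Complex.norm_real, Real.norm_eq_abs]
    _ ≤ L * ‖w y‖ + 1 * ‖deriv w y‖ := by gcongr
    _ = ‖deriv w y‖ + L * ‖w y‖ := by ring

theorem l2_deriv_ofReal_mul_sq_le {L : ℝ} {χ : ℝ → ℝ} {w : ℝ → ℂ} (hχ : ContDiff ℝ 1 χ)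
    (hw : ContDiff ℝ 1 w) (hχ_le : ∀ y, |χ y| ≤ 1) (hχ'_le : ∀ y, |deriv χ y| ≤ L) :
    l2 (deriv fun y ↦ (χ y : ℂ) * w y) ^ 2 ≤ 2 * l2 (deriv w) ^ 2 + 2 * L ^ 2 * l2 w ^ 2 := by
  have hχw : ContDiff ℝ 1 fun y ↦ (χ y : ℂ) * w y := (Complex.ofRealCLM.contDiff.comp hχ).mul hw
  have : Continuous (deriv fun y ↦ (χ y : ℂ) * w y) := hχw.continuous_deriv le_rfl
  have : Continuous (deriv w) := hw.continuous_deriv le_rfl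
  have : Continuous w := hw.continuous
  simp only [l2_sq]
  rw [← intervalIntegral.integral_const_mul, ← intervalIntegral.integral_const_mul,
    ← intervalIntegral.integral_add (Continuous.intervalIntegrable (by fun_prop) _ _)
      (Continuous.intervalIntegrable (by fun_prop) _ _)]
  refine intervalIntegral.integral_mono_on (by norm_num)
    (Continuous.intervalIntegrable (by fun_prop) _ _)
    (Continuous.intervalIntegrable (by fun_prop) _ _) fun y _ ↦ ?_
  calc ‖deriv (fun y ↦ (χ y : ℂ) * w y) y‖ ^ 2
      ≤ (‖deriv w y‖ + L * ‖w y‖) ^ 2 := by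
        gcongr
        exact norm_deriv_ofReal_mul_le (hχ.differentiable one_ne_zero y)
          (hw.differentiable one_ne_zero y) (hχ_le y) (hχ'_le y)
    _ ≤ 2 * (‖deriv w y‖ ^ 2 + (L * ‖w y‖) ^ 2) := add_sq_le
    _ = 2 * ‖deriv w y‖ ^ 2 + 2 * L ^ 2 * ‖w y‖ ^ 2 := by ring

theorem hk_ofReal_mul_le (k₁ k₃ : ℤ) {L : ℝ} {χ : ℝ → ℝ} {w : ℝ → ℂ} (hχ : ContDiff ℝ 1 χ)
    (hw : ContDiff ℝ 1 w) (hχ_le : ∀ y, |χ y| ≤ 1) (hχ'_le : ∀ y, |deriv χ y| ≤ L) :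
    hk k₁ k₃ (fun y ↦ (χ y : ℂ) * w y) ≤ 2 * (hk k₁ k₃ w + L * l2 w) := by
  have hL : 0 ≤ L := (abs_nonneg _).trans (hχ'_le 0)
  have hH := hk_nonneg k₁ k₃ w
  have hN := l2_nonneg w
  refine le_of_sq_le_sq ?_ (by positivity)
  calc hk k₁ k₃ (fun y ↦ (χ y : ℂ) * w y) ^ 2
      ≤ 2 * l2 (deriv w) ^ 2 + 2 * L ^ 2 * l2 w ^ 2 + kabs k₁ k₃ ^ 2 * l2 w ^ 2 := by
        rw [hk_sq]
        gcongr
        exacts [l2_deriv_ofReal_mul_sq_le hχ hw hχ_le hχ'_le, l2_nonneg _,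
          l2_ofReal_mul_le hχ.continuous hw.continuous hχ_le]
    _ ≤ 2 * hk k₁ k₃ w ^ 2 + 2 * (L * l2 w) ^ 2 := by
        rw [hk_sq]; nlinarith [mul_nonneg (sq_nonneg (kabs k₁ k₃)) (sq_nonneg (l2 w))]
    _ ≤ (2 * (hk k₁ k₃ w + L * l2 w)) ^ 2 := by
        nlinarith [mul_nonneg hH (mul_nonneg hL hN), sq_nonneg (L * l2 w)]

/-! ### Smoothed signs and turning points -/

/-- The sign of `u` smoothed at scale `s`: it is smooth in `u` when `s ≠ 0` and close to `±1` when
`|s|` is much smaller than `|u|`. -/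
def regSign (u s : ℝ) : ℝ := u / √(u ^ 2 + s ^ 2)

theorem abs_regSign_le_one (u s : ℝ) : |regSign u s| ≤ 1 := by
  rw [regSign, abs_div, abs_of_nonneg (Real.sqrt_nonneg _)]
  exact div_le_one_of_le₀ (Real.abs_le_sqrt (le_add_of_nonneg_right (sq_nonneg s)))
    (Real.sqrt_nonneg _)

theorem mul_regSign_nonneg (u s : ℝ) : 0 ≤ u * regSign u s := by
  rw [regSign, mul_div_assoc']
  exact div_nonneg (mul_self_nonneg u) (Real.sqrt_nonneg _)

theorem half_abs_le_mul_regSign {u s : ℝ} (h : s ^ 2 ≤ 3 * u ^ 2) : |u| / 2 ≤ u * regSign u s := by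
  rcases eq_or_ne u 0 with rfl | hu
  · simp
  have hpos : 0 < √(u ^ 2 + s ^ 2) := Real.sqrt_pos.2 (by positivity)
  have hsqrt : √(u ^ 2 + s ^ 2) ≤ 2 * |u| :=
    Real.sqrt_le_iff.2 ⟨by positivity, by rw [mul_pow, sq_abs]; linarith⟩
  rw [regSign, mul_div_assoc', ← abs_mul_abs_self u, le_div_iff₀ hpos]
  nlinarith [abs_nonneg u]

theorem contDiff_regSign {n : WithTop ℕ∞} {u s : ℝ → ℝ} (hu : ContDiff ℝ n u)
    (hs : ContDiff ℝ n s) (hs0 : ∀ y, s y ≠ 0) : ContDiff ℝ n fun y ↦ regSign (u y) (s y) := by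
  have hpos : ∀ y, 0 < u y ^ 2 + s y ^ 2 := fun y ↦ by have := hs0 y; positivity
  exact hu.div (((hu.pow 2).add (hs.pow 2)).sqrt fun y ↦ (hpos y).ne')
    fun y ↦ (Real.sqrt_pos.2 (hpos y)).ne'

theorem hasDerivAt_regSign {u s : ℝ → ℝ} {u' s' y : ℝ} (hu : HasDerivAt u u' y)
    (hs : HasDerivAt s s' y) (hs0 : s y ≠ 0) :
    HasDerivAt (fun t ↦ regSign (u t) (s t))
      (s y * (u' * s y - u y * s') / √(u y ^ 2 + s y ^ 2) ^ 3) y := by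
  have hpos : 0 < u y ^ 2 + s y ^ 2 := by positivity
  have hsqrt := Real.sqrt_pos.2 hpos
  refine (hu.div (((hu.pow 2).add (hs.pow 2)).sqrt hpos.ne') hsqrt.ne').congr_deriv ?_
  simp only [Pi.add_apply, Pi.pow_apply]
  field_simp
  rw [Real.sq_sqrt hpos.le]
  push_cast
  ring

theorem abs_deriv_regSign_le {u s : ℝ → ℝ} {u' s' y A B : ℝ} (hu : HasDerivAt u u' y)
    (hs : HasDerivAt s s' y) (hs0 : 0 < s y) (hA : |u'| ≤ A * s y) (hB : |s'| ≤ B * s y) :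
    |deriv (fun t ↦ regSign (u t) (s t)) y| ≤ A + B := by
  have hA0 : 0 ≤ A := nonneg_of_mul_nonneg_left ((abs_nonneg _).trans hA) hs0
  have hB0 : 0 ≤ B := nonneg_of_mul_nonneg_left ((abs_nonneg _).trans hB) hs0
  rw [(hasDerivAt_regSign hu hs hs0.ne').deriv]
  set S := √(u y ^ 2 + s y ^ 2)
  have hS : 0 < S := Real.sqrt_pos.2 (by positivity)
  have hsS : s y ≤ S := Real.le_sqrt_of_sq_le (le_add_of_nonneg_left (sq_nonneg _))
  have huS : |u y| ≤ S := Real.abs_le_sqrt (le_add_of_nonneg_right (sq_nonneg _))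
  rw [abs_div, abs_of_pos (pow_pos hS 3), div_le_iff₀ (pow_pos hS 3)]
  calc |s y * (u' * s y - u y * s')|
      ≤ s y * (|u'| * s y + |u y| * |s'|) := by
        rw [abs_mul, abs_of_pos hs0]
        gcongr
        refine (abs_sub _ _).trans_eq ?_
        rw [abs_mul, abs_mul, abs_of_pos hs0]
    _ ≤ S * (A * S * S + S * (B * S)) := by
        gcongr
        exacts [hA.trans (by gcongr), hB.trans (by gcongr)]
    _ = (A + B) * S ^ 3 := by ring

/-- The sign of `c - y ^ 2` smoothed over a distance `δ` in the variable `y`: the scale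
`δ * √(y ^ 2 + δ ^ 2)` is comparable to the variation of `y ^ 2` over an interval of length `δ`. -/
def turningSign (c δ y : ℝ) : ℝ := regSign (c - y ^ 2) (δ * √(y ^ 2 + δ ^ 2))

theorem abs_turningSign_le_one (c δ y : ℝ) : |turningSign c δ y| ≤ 1 := abs_regSign_le_one _ _

theorem contDiff_turningSign (c : ℝ) {δ : ℝ} (hδ : δ ≠ 0) {n : WithTop ℕ∞} :
    ContDiff ℝ n (turningSign c δ) := by
  have hpos : ∀ y : ℝ, 0 < y ^ 2 + δ ^ 2 := fun y ↦ by positivity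
  exact contDiff_regSign (by fun_prop)
    (contDiff_const.mul (ContDiff.sqrt (by fun_prop) fun y ↦ (hpos y).ne'))
    fun y ↦ mul_ne_zero hδ (Real.sqrt_pos.2 (hpos y)).ne'

theorem abs_deriv_turningSign_le (c : ℝ) {δ : ℝ} (hδ : 0 < δ) (y : ℝ) :
    |deriv (turningSign c δ) y| ≤ 3 / δ := by
  have hpos : 0 < y ^ 2 + δ ^ 2 := by positivity
  have hS := Real.sqrt_pos.2 hpos
  have hyS : |y| ≤ √(y ^ 2 + δ ^ 2) := Real.abs_le_sqrt (le_add_of_nonneg_right (sq_nonneg δ))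
  have hδS : δ ≤ √(y ^ 2 + δ ^ 2) := Real.le_sqrt_of_sq_le (le_add_of_nonneg_left (sq_nonneg y))
  have hu : HasDerivAt (fun t : ℝ ↦ c - t ^ 2) (-(2 * y)) y := by
    simpa using (hasDerivAt_pow 2 y).const_sub c
  have hs : HasDerivAt (fun t : ℝ ↦ δ * √(t ^ 2 + δ ^ 2)) (δ * (y / √(y ^ 2 + δ ^ 2))) y := by
    refine ((((hasDerivAt_pow 2 y).add_const (δ ^ 2)).sqrt hpos.ne').const_mul δ).congr_deriv ?_
    push_cast
    field_simp
  refine (abs_deriv_regSign_le (A := 2 / δ) (B := 1 / δ) hu hs (mul_pos hδ hS) ?_ ?_).trans_eq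
    (by ring)
  · rw [abs_neg, abs_mul, abs_two, ← mul_assoc, div_mul_cancel₀ _ hδ.ne']
    gcongr
  · rw [← mul_assoc, div_mul_cancel₀ _ hδ.ne', one_mul, abs_mul, abs_div, abs_of_pos hδ,
      abs_of_pos hS]
    exact (mul_le_of_le_one_right hδ.le (div_le_one_of_le₀ hyS hS.le)).trans hδS

/-- A Lorentzian bump of width `δ` centred at `p`. It is the derivative of a function bounded by
`π * δ`, and is normalised to be at least `1` within distance `δ` of `p`. -/
def cauchyBump (δ p y : ℝ) : ℝ := 2 / (1 + ((y - p) / δ) ^ 2)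

theorem cauchyBump_nonneg (δ p y : ℝ) : 0 ≤ cauchyBump δ p y := by
  rw [cauchyBump]; positivity

theorem one_le_cauchyBump {δ p y : ℝ} (h : |y - p| ≤ δ) : 1 ≤ cauchyBump δ p y := by
  have hδ : 0 ≤ δ := (abs_nonneg _).trans h
  have : ((y - p) / δ) ^ 2 ≤ 1 := by
    rw [sq_le_one_iff_abs_le_one, abs_div, abs_of_nonneg hδ]
    exact div_le_one_of_le₀ h hδ
  rw [cauchyBump, le_div_iff₀ (by positivity)]
  linarith

theorem continuous_cauchyBump (δ p : ℝ) : Continuous (cauchyBump δ p) :=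
  continuous_const.div (by fun_prop) fun y ↦ by positivity

theorem hasDerivAt_arctan_cauchyBump {δ : ℝ} (hδ : δ ≠ 0) (p y : ℝ) :
    HasDerivAt (fun t ↦ 2 * δ * Real.arctan ((t - p) / δ)) (cauchyBump δ p y) y := by
  refine ((((hasDerivAt_id y).sub_const p).div_const δ).arctan.const_mul (2 * δ)).congr_deriv ?_
  simp only [id, cauchyBump]
  field_simp

theorem integral_cauchyBump_mul_norm_sq_le {E : Type*} [NormedAddCommGroup E]
    [InnerProductSpace ℝ E] {a b δ : ℝ} {w : ℝ → E} (hab : a ≤ b) (hδ : 0 < δ) (p : ℝ)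
    (hw : ContDiff ℝ 1 w) (ha : w a = 0) (hb : w b = 0) :
    ∫ y in a..b, cauchyBump δ p y * ‖w y‖ ^ 2 ≤ 2 * π * δ * ∫ y in a..b, ‖w y‖ * ‖deriv w y‖ := by
  have primitive_le : ∀ y, |2 * δ * Real.arctan ((y - p) / δ)| ≤ π * δ := fun y ↦ by
    have := (abs_lt.2 ⟨Real.neg_pi_div_two_lt_arctan ((y - p) / δ),
      Real.arctan_lt_pi_div_two ((y - p) / δ)⟩).le
    calc |2 * δ * Real.arctan ((y - p) / δ)| = 2 * δ * |Real.arctan ((y - p) / δ)| := by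
          rw [abs_mul, abs_of_pos (by positivity)]
      _ ≤ 2 * δ * (π / 2) := by gcongr
      _ = π * δ := by ring
  rw [mul_assoc 2]
  exact integral_deriv_mul_norm_sq_le hab (hasDerivAt_arctan_cauchyBump hδ.ne' p)
    (continuous_cauchyBump δ p) primitive_le hw ha hb

theorem abs_sub_sqrt_le_or_abs_add_sqrt_le {c δ y : ℝ} (h : |c - y ^ 2| < δ * |y|)
    (hy : δ ≤ |y|) : |y - √c| ≤ δ ∨ |y + √c| ≤ δ := by
  have hc : 0 ≤ c := by
    have := (abs_lt.1 h).1
    nlinarith [abs_nonneg y, sq_abs y]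
  have key : |y - √c| * |y + √c| < δ * |y| := by
    rw [← abs_mul, ← abs_neg, show -((y - √c) * (y + √c)) = c - y ^ 2 by
      linear_combination Real.sq_sqrt hc]
    exact h
  -- `y` has the sign opposite to one of `±√c`, and is at distance at least `|y|` from that one.
  have far : |y| ≤ max |y - √c| |y + √c| := by
    refine abs_le_max_abs_abs ?_ ?_ <;> linarith [Real.sqrt_nonneg c]
  rcases le_max_iff.1 far with hfar | hfar
  · exact .inr (by nlinarith [abs_nonneg (y + √c), abs_nonneg y])
  · exact .inl (by nlinarith [abs_nonneg (y - √c), abs_nonneg y])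

/-- The sum of the bumps of width `δ` at the critical point `0` and the turning points `±√c` of
`c - y ^ 2`, covering the layers where `(c - y ^ 2) * turningSign c δ y` may be small. For `c < 0`
there are no turning points, and `√c = 0` merely repeats the bump at `0`. -/
def turningBumps (c δ y : ℝ) : ℝ :=
  cauchyBump δ 0 y + cauchyBump δ (√c) y + cauchyBump δ (-√c) y

theorem turningBumps_nonneg (c δ y : ℝ) : 0 ≤ turningBumps c δ y :=
  add_nonneg (add_nonneg (cauchyBump_nonneg _ _ _) (cauchyBump_nonneg _ _ _))
    (cauchyBump_nonneg _ _ _)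

theorem continuous_turningBumps (c δ : ℝ) : Continuous (turningBumps c δ) :=
  ((continuous_cauchyBump _ _).add (continuous_cauchyBump _ _)).add (continuous_cauchyBump _ _)

theorem one_le_turningBumps {c δ y : ℝ} (h : |y| ≤ δ ∨ |y - √c| ≤ δ ∨ |y + √c| ≤ δ) :
    1 ≤ turningBumps c δ y := by
  have h₀ := cauchyBump_nonneg δ 0 y
  have h₁ := cauchyBump_nonneg δ (√c) y
  have h₂ := cauchyBump_nonneg δ (-√c) y
  rw [turningBumps]
  rcases h with h | h | h
  · linarith [one_le_cauchyBump (p := 0) (by simpa using h)]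
  · linarith [one_le_cauchyBump h]
  · linarith [one_le_cauchyBump (p := -√c) (by simpa using h)]

theorem one_le_mul_turningSign_add_turningBumps (c : ℝ) {δ : ℝ} (hδ : 0 < δ) (y : ℝ) :
    1 ≤ 2 / δ ^ 2 * ((c - y ^ 2) * turningSign c δ y) + turningBumps c δ y := by
  have sign_nonneg : 0 ≤ 2 / δ ^ 2 * ((c - y ^ 2) * turningSign c δ y) :=
    mul_nonneg (by positivity) (mul_regSign_nonneg _ _)
  by_cases near : |y| ≤ δ ∨ |y - √c| ≤ δ ∨ |y + √c| ≤ δ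
  · exact le_add_of_nonneg_of_le sign_nonneg (one_le_turningBumps near)
  push Not at near
  obtain ⟨hy, hy₁, hy₂⟩ := near
  have far : δ * |y| ≤ |c - y ^ 2| := by
    by_contra! h
    rcases abs_sub_sqrt_le_or_abs_add_sqrt_le h hy.le with h | h <;> linarith
  have scale_le : (δ * √(y ^ 2 + δ ^ 2)) ^ 2 ≤ 3 * (c - y ^ 2) ^ 2 := by
    have hδy : δ ^ 2 ≤ y ^ 2 := (sq_le_sq₀ hδ.le (abs_nonneg y)).2 hy.le |>.trans_eq (sq_abs y)
    have hfar : δ ^ 2 * y ^ 2 ≤ (c - y ^ 2) ^ 2 := by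
      rw [← mul_pow, ← sq_abs, ← sq_abs (c - y ^ 2), abs_mul, abs_of_pos hδ]
      gcongr
    rw [mul_pow, Real.sq_sqrt (by positivity)]
    nlinarith [mul_le_mul_of_nonneg_left hδy (sq_nonneg δ)]
  have sign_lower : δ ^ 2 / 2 ≤ (c - y ^ 2) * turningSign c δ y := by
    have := half_abs_le_mul_regSign scale_le
    rw [turningSign]
    nlinarith
  refine le_add_of_le_of_nonneg ?_ (turningBumps_nonneg c δ y)
  rwa [div_mul_eq_mul_div, one_le_div (by positivity), ← div_le_iff₀' two_pos]

theorem integral_turningBumps_mul_norm_sq_le {E : Type*} [NormedAddCommGroup E]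
    [InnerProductSpace ℝ E] {a b δ : ℝ} {w : ℝ → E} (hab : a ≤ b) (c : ℝ) (hδ : 0 < δ)
    (hw : ContDiff ℝ 1 w) (ha : w a = 0) (hb : w b = 0) :
    ∫ y in a..b, turningBumps c δ y * ‖w y‖ ^ 2 ≤
      6 * π * δ * ∫ y in a..b, ‖w y‖ * ‖deriv w y‖ := by
  have hint : ∀ p, IntervalIntegrable (fun y ↦ cauchyBump δ p y * ‖w y‖ ^ 2) volume a b :=
    fun p ↦ ((continuous_cauchyBump δ p).mul (hw.continuous.norm.pow 2)).intervalIntegrable _ _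
  have bump := fun p ↦ integral_cauchyBump_mul_norm_sq_le hab hδ p hw ha hb
  simp only [turningBumps, add_mul]
  rw [intervalIntegral.integral_add ((hint _).add (hint _)) (hint _),
    intervalIntegral.integral_add (hint _) (hint _)]
  linarith [bump 0, bump (√c), bump (-√c)]

theorem l2_sq_le_integral_turningSign_add {w : ℝ → ℂ} (c : ℝ) {δ : ℝ} (hδ : 0 < δ)
    (hw : ContDiff ℝ 1 w) (h₀ : w (-1) = 0) (h₁ : w 1 = 0) :
    l2 w ^ 2 ≤ 2 / δ ^ 2 * (∫ y in (-1 : ℝ)..1, (c - y ^ 2) * turningSign c δ y * ‖w y‖ ^ 2) +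
      6 * π * δ * (l2 w * l2 (deriv w)) := by
  have cw := hw.continuous
  have cχ : Continuous (turningSign c δ) := (contDiff_turningSign c hδ.ne' (n := 0)).continuous
  have cB := continuous_turningBumps c δ
  have layers := integral_turningBumps_mul_norm_sq_le (show (-1 : ℝ) ≤ 1 by norm_num) c hδ hw h₀ h₁
  have cauchy_schwarz := integral_norm_mul_norm_le_l2_mul_l2 (memLp_two_restrict_Ioc cw _ _)
    (memLp_two_restrict_Ioc (hw.continuous_deriv le_rfl) _ _)
  calc l2 w ^ 2
      ≤ ∫ y in (-1 : ℝ)..1, (2 / δ ^ 2 * ((c - y ^ 2) * turningSign c δ y * ‖w y‖ ^ 2) +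
          turningBumps c δ y * ‖w y‖ ^ 2) := by
        rw [l2_sq]
        refine intervalIntegral.integral_mono_on (by norm_num)
          (Continuous.intervalIntegrable (by fun_prop) _ _)
          (Continuous.intervalIntegrable (by fun_prop) _ _) fun y _ ↦ ?_
        rw [← mul_assoc, ← add_mul]
        exact le_mul_of_one_le_left (sq_nonneg _)
          (one_le_mul_turningSign_add_turningBumps c hδ y)
    _ = 2 / δ ^ 2 * (∫ y in (-1 : ℝ)..1, (c - y ^ 2) * turningSign c δ y * ‖w y‖ ^ 2) +
          ∫ y in (-1 : ℝ)..1, turningBumps c δ y * ‖w y‖ ^ 2 := by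
        rw [intervalIntegral.integral_add (Continuous.intervalIntegrable (by fun_prop) _ _)
          (Continuous.intervalIntegrable (by fun_prop) _ _), intervalIntegral.integral_const_mul]
    _ ≤ _ := by
        gcongr
        exact layers.trans (by gcongr)

/-! ### Estimates for solutions -/

namespace OSlocal

variable {ν lam ε : ℝ} {k₁ k₃ : ℤ} {w F : ℝ → ℂ}

theorem intervalIntegrable (h : OSlocal ν k₁ k₃ lam ε w F) :
    IntervalIntegrable F volume (-1) 1 := by
  obtain ⟨hw, heq, -, -⟩ := h
  have : Continuous w := hw.continuous
  have : Continuous (deriv (deriv w)) := hw.deriv'.continuous_deriv le_rfl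
  refine ContinuousOn.intervalIntegrable ?_
  rw [Set.uIcc_of_le (by norm_num)]
  exact ContinuousOn.congr (Continuous.continuousOn (by fun_prop)) fun y hy ↦ (heq y hy).symm

theorem integral_mul_conj (h : OSlocal ν k₁ k₃ lam ε w F) {g : ℝ → ℂ} (hg : ContDiff ℝ 1 g)
    (hg₀ : g (-1) = 0) (hg₁ : g 1 = 0) :
    ∫ y in (-1 : ℝ)..1, F y * conj (g y) =
      ν * (∫ y in (-1 : ℝ)..1, deriv w y * conj (deriv g y)) +
      ((ν * kabs k₁ k₃ ^ 2 - ε * √(ν * |(k₁ : ℝ)|) : ℝ) : ℂ) *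
        (∫ y in (-1 : ℝ)..1, w y * conj (g y)) +
      Complex.I * k₁ * ∫ y in (-1 : ℝ)..1, ((1 - lam - y ^ 2 : ℝ) : ℂ) * (w y * conj (g y)) := by
  obtain ⟨hw, heq, -, -⟩ := h
  have hw' : ContDiff ℝ 1 (deriv w) := hw.deriv'
  have : Continuous w := hw.continuous
  have : Continuous g := hg.continuous
  have : Continuous (deriv (deriv w)) := hw'.continuous_deriv le_rfl
  rw [← neg_eq_iff_eq_neg.2 (integral_deriv_mul_conj hw' hg hg₀ hg₁)]
  simp only [← intervalIntegral.integral_neg, ← intervalIntegral.integral_const_mul]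
  rw [← intervalIntegral.integral_add (Continuous.intervalIntegrable (by fun_prop) _ _)
      (Continuous.intervalIntegrable (by fun_prop) _ _),
    ← intervalIntegral.integral_add (Continuous.intervalIntegrable (by fun_prop) _ _)
      (Continuous.intervalIntegrable (by fun_prop) _ _)]
  refine intervalIntegral.integral_congr fun y hy ↦ ?_
  rw [Set.uIcc_of_le (by norm_num)] at hy
  simp only [← heq y hy]
  push_cast
  ring

theorem mul_hk_sq_le (h : OSlocal ν k₁ k₃ lam ε w F) :
    ν * hk k₁ k₃ w ^ 2 ≤ ε * √(ν * |(k₁ : ℝ)|) * l2 w ^ 2 + hm1 k₁ k₃ F * hk k₁ k₃ w := by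
  have ⟨hw, _, h₀, h₁⟩ := h
  have hw1 : ContDiff ℝ 1 w := hw.of_le one_le_two
  have energy : (∫ y in (-1 : ℝ)..1, F y * conj (w y)).re =
      ν * hk k₁ k₃ w ^ 2 - ε * √(ν * |(k₁ : ℝ)|) * l2 w ^ 2 := by
    have norm_sq := fun f ↦ integral_real_mul_conj_self (a := -1) (b := 1) (fun _ ↦ 1) f
    simp only [Complex.ofReal_one, one_mul, ← l2_sq] at norm_sq
    rw [h.integral_mul_conj hw1 h₀ h₁, integral_real_mul_conj_self, norm_sq, norm_sq, hk_sq]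
    simp only [Complex.add_re, Complex.mul_re, Complex.ofReal_re, Complex.ofReal_im, Complex.I_re,
      Complex.I_im, Complex.intCast_re, Complex.intCast_im, Complex.mul_im]
    ring
  have := (Complex.re_le_norm _).trans
    (norm_integral_mul_conj_le_hm1_mul_hk (k₁ := k₁) (k₃ := k₃) h.intervalIntegrable hw1 h₀ h₁)
  linarith

theorem im_integral_mul_conj_ofReal_mul (h : OSlocal ν k₁ k₃ lam ε w F) {χ : ℝ → ℝ}
    (hχ : ContDiff ℝ 1 χ) :
    (∫ y in (-1 : ℝ)..1, F y * conj (χ y * w y)).im =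
      k₁ * (∫ y in (-1 : ℝ)..1, (1 - lam - y ^ 2) * χ y * ‖w y‖ ^ 2) +
      ν * (∫ y in (-1 : ℝ)..1, ((deriv χ y : ℝ) : ℂ) * (deriv w y * conj (w y))).im := by
  have ⟨hw, _, h₀, h₁⟩ := h
  have hw1 : ContDiff ℝ 1 w := hw.of_le one_le_two
  have hχw : ContDiff ℝ 1 fun y ↦ (χ y : ℂ) * w y := (Complex.ofRealCLM.contDiff.comp hχ).mul hw1
  have mass : ∫ y in (-1 : ℝ)..1, w y * conj ((χ y : ℂ) * w y) =
      ((∫ y in (-1 : ℝ)..1, χ y * ‖w y‖ ^ 2 : ℝ) : ℂ) := by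
    simpa using integral_real_mul_conj_real_mul (fun _ ↦ 1) χ w
  rw [h.integral_mul_conj hχw (by simp [h₀]) (by simp [h₁]), mass,
    integral_deriv_mul_conj_deriv_ofReal_mul hχ hw1, integral_real_mul_conj_real_mul]
  simp only [Complex.add_im, Complex.add_re, Complex.mul_re, Complex.mul_im, Complex.ofReal_re,
    Complex.ofReal_im, Complex.I_re, Complex.I_im, Complex.intCast_re, Complex.intCast_im]
  ring

theorem abs_mul_abs_integral_mul_norm_sq_le (h : OSlocal ν k₁ k₃ lam ε w F) (hν : 0 ≤ ν)
    {L : ℝ} {χ : ℝ → ℝ} (hχ : ContDiff ℝ 1 χ) (hχ_le : ∀ y, |χ y| ≤ 1)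
    (hχ'_le : ∀ y, |deriv χ y| ≤ L) :
    |(k₁ : ℝ)| * |∫ y in (-1 : ℝ)..1, (1 - lam - y ^ 2) * χ y * ‖w y‖ ^ 2| ≤
      2 * hm1 k₁ k₃ F * (hk k₁ k₃ w + L * l2 w) + ν * L * (l2 w * hk k₁ k₃ w) := by
  have ⟨hw, _, h₀, h₁⟩ := h
  have hw1 : ContDiff ℝ 1 w := hw.of_le one_le_two
  have hχw : ContDiff ℝ 1 fun y ↦ (χ y : ℂ) * w y := (Complex.ofRealCLM.contDiff.comp hχ).mul hw1
  have hL : 0 ≤ L := (abs_nonneg _).trans (hχ'_le 0)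
  set R := ∫ y in (-1 : ℝ)..1, ((deriv χ y : ℝ) : ℂ) * (deriv w y * conj (w y))
  have commutator : ‖R‖ ≤ L * (l2 w * hk k₁ k₃ w) := by
    refine (norm_integral_real_mul_deriv_mul_conj_le hw1 hχ'_le).trans ?_
    gcongr
    exacts [l2_nonneg _, l2_deriv_le_hk _ _ _]
  have forcing : |(∫ y in (-1 : ℝ)..1, F y * conj (χ y * w y)).im| ≤
      hm1 k₁ k₃ F * (2 * (hk k₁ k₃ w + L * l2 w)) := by
    refine (Complex.abs_im_le_norm _).trans <| (norm_integral_mul_conj_le_hm1_mul_hk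
      (k₁ := k₁) (k₃ := k₃) h.intervalIntegrable hχw (by simp [h₀])
      (by simp [h₁])).trans ?_
    gcongr
    exacts [hm1_nonneg _ _ _, hk_ofReal_mul_le k₁ k₃ hχ hw1 hχ_le hχ'_le]
  rw [← abs_mul, eq_sub_of_add_eq (h.im_integral_mul_conj_ofReal_mul hχ).symm]
  refine (abs_sub _ _).trans ?_
  rw [abs_mul, abs_of_nonneg hν]
  have := mul_le_mul_of_nonneg_left ((Complex.abs_im_le_norm R).trans commutator) hν
  linarith

theorem abs_mul_l2_sq_le (h : OSlocal ν k₁ k₃ lam ε w F) (hν : 0 ≤ ν) {δ : ℝ}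
    (hδ : 0 < δ) :
    |(k₁ : ℝ)| * l2 w ^ 2 ≤ 4 * hm1 k₁ k₃ F / δ ^ 2 * (hk k₁ k₃ w + 3 / δ * l2 w) +
      6 * (ν / δ ^ 3 + π * |(k₁ : ℝ)| * δ) * (l2 w * hk k₁ k₃ w) := by
  have ⟨hw, _, h₀, h₁⟩ := h
  have hw1 : ContDiff ℝ 1 w := hw.of_le one_le_two
  have flux := h.abs_mul_abs_integral_mul_norm_sq_le hν (contDiff_turningSign (1 - lam) hδ.ne')
    (abs_turningSign_le_one _ _) (abs_deriv_turningSign_le _ hδ)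
  set P := ∫ y in (-1 : ℝ)..1, (1 - lam - y ^ 2) * turningSign (1 - lam) δ y * ‖w y‖ ^ 2
  calc |(k₁ : ℝ)| * l2 w ^ 2
      ≤ |(k₁ : ℝ)| * (2 / δ ^ 2 * |P| + 6 * π * δ * (l2 w * hk k₁ k₃ w)) := by
        gcongr
        refine (l2_sq_le_integral_turningSign_add (1 - lam) hδ hw1 h₀ h₁).trans ?_
        gcongr
        exacts [le_abs_self _, l2_nonneg _, l2_deriv_le_hk _ _ _]
    _ = 2 / δ ^ 2 * (|(k₁ : ℝ)| * |P|) + 6 * π * |(k₁ : ℝ)| * δ * (l2 w * hk k₁ k₃ w) := by ring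
    _ ≤ 2 / δ ^ 2 * (2 * hm1 k₁ k₃ F * (hk k₁ k₃ w + 3 / δ * l2 w) +
          ν * (3 / δ) * (l2 w * hk k₁ k₃ w)) +
          6 * π * |(k₁ : ℝ)| * δ * (l2 w * hk k₁ k₃ w) := by gcongr
    _ = _ := by field_simp; ring

end OSlocal

theorem exists_viscous_scale {ν a : ℝ} (hν : 0 < ν) (ha : 0 < a) :
    ∃ δ > 0, ν = a * δ ^ 4 ∧ √(ν * a) = a * δ ^ 2 ∧
      ν ^ ((3 : ℝ) / 4) * a ^ ((1 : ℝ) / 4) = a * δ ^ 3 := by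
  set δ := (ν / a) ^ ((1 : ℝ) / 4)
  have hδ : 0 < δ := Real.rpow_pos_of_pos (div_pos hν ha) _
  have hν_eq : ν = a * δ ^ 4 := by
    have : δ ^ 4 = ν / a := by
      rw [← Real.rpow_natCast, ← Real.rpow_mul (div_pos hν ha).le]
      norm_num
    rw [this, mul_div_cancel₀ _ ha.ne']
  refine ⟨δ, hδ, hν_eq, ?_, ?_⟩
  · rw [hν_eq, show a * δ ^ 4 * a = (a * δ ^ 2) ^ 2 by ring, Real.sqrt_sq (by positivity)]
  · calc ν ^ ((3 : ℝ) / 4) * a ^ ((1 : ℝ) / 4)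
        = a ^ ((3 : ℝ) / 4) * δ ^ 3 * a ^ ((1 : ℝ) / 4) := by
          rw [hν_eq, Real.mul_rpow ha.le (by positivity), ← Real.rpow_natCast δ 4,
            ← Real.rpow_mul hδ.le, ← Real.rpow_natCast δ 3]
          norm_num
      _ = a ^ ((3 : ℝ) / 4 + 1 / 4) * δ ^ 3 := by rw [Real.rpow_add ha]; ring
      _ = a * δ ^ 3 := by norm_num

theorem add_le_of_energy_of_flux {ε h N m : ℝ} (hε : ε ≤ 1 / 6000) (hm : 0 ≤ m)
    (energy : h ^ 2 ≤ ε * N ^ 2 + m * h)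
    (flux : N ^ 2 ≤ m * (4 * h + 12 * N) + 27 * (N * h)) : h + N ≤ 100 * m := by
  have h_sq : h ^ 2 ≤ N ^ 2 / 3000 + m ^ 2 := by nlinarith [sq_nonneg (h - m), sq_nonneg N]
  have N_sq : N ^ 2 ≤ 292 * m ^ 2 + 1462 * h ^ 2 := by
    nlinarith [sq_nonneg (h - m), sq_nonneg (N - 24 * m), sq_nonneg (N - 54 * h)]
  have N_le : N ≤ 90 * m := abs_le_of_sq_le_sq' (by nlinarith) (by positivity) |>.2
  have h_le : h ≤ 10 * m := abs_le_of_sq_le_sq' (by nlinarith) (by positivity) |>.2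
  linarith

theorem OS_local_resolvent_Hm1_general {ν ε lam : ℝ} {k₁ k₃ : ℤ} {w F : ℝ → ℂ} (hν : 0 < ν)
    (hε : ε ≤ 1 / 6000) (hk₁ : k₁ ≠ 0) (h : OSlocal ν k₁ k₃ lam ε w F) :
    ν * hk k₁ k₃ w + ν ^ ((3 : ℝ) / 4) * |(k₁ : ℝ)| ^ ((1 : ℝ) / 4) * l2 w ≤
      100 * hm1 k₁ k₃ F := by
  have ha : 0 < |(k₁ : ℝ)| := by positivity
  obtain ⟨δ, hδ, hν_eq, hsqrt, hpow⟩ := exists_viscous_scale hν ha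
  have energy := h.mul_hk_sq_le
  have flux := h.abs_mul_l2_sq_le hν.le hδ
  rw [hsqrt] at energy
  rw [hpow, hν_eq]
  rw [hν_eq] at energy flux
  set a := |(k₁ : ℝ)|
  obtain ⟨m, hm⟩ : ∃ m, hm1 k₁ k₃ F = a * δ ^ 3 * m := ⟨hm1 k₁ k₃ F / (a * δ ^ 3), by field_simp⟩
  have hm0 : 0 ≤ m := nonneg_of_mul_nonneg_right (hm ▸ hm1_nonneg k₁ k₃ F) (by positivity)
  have hN := l2_nonneg w
  have hH := hk_nonneg k₁ k₃ w
  have scaled : δ * hk k₁ k₃ w + l2 w ≤ 100 * m := by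
    refine add_le_of_energy_of_flux hε hm0 ?_ ?_
    · refine le_of_mul_le_mul_left (a := a * δ ^ 2) ?_ (by positivity)
      linear_combination energy + hk k₁ k₃ w * hm
    · refine le_of_mul_le_mul_left (a := a) ?_ ha
      have hπ : 6 * (1 + π) ≤ 27 := by linarith [Real.pi_lt_d2]
      calc a * l2 w ^ 2
          ≤ _ := flux
        _ = a * (m * (4 * (δ * hk k₁ k₃ w) + 12 * l2 w) +
              6 * (1 + π) * (l2 w * (δ * hk k₁ k₃ w))) := by rw [hm]; field_simp; ring
        _ ≤ _ := by gcongr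
  calc a * δ ^ 4 * hk k₁ k₃ w + a * δ ^ 3 * l2 w
      = a * δ ^ 3 * (δ * hk k₁ k₃ w + l2 w) := by ring
    _ ≤ a * δ ^ 3 * (100 * m) := by gcongr
    _ = 100 * hm1 k₁ k₃ F := by rw [hm]; ring

/-- **Resolvent estimate for the Orr–Sommerfeld equation without nonlocal
term, `F₁ ∈ H⁻¹_k`** (Proposition 2.17):
`ν‖(∂_y,|k|)w‖_{L²} + ν^{3/4}|k₁|^{1/4}‖w‖_{L²} ≤ C‖F₁‖_{H⁻¹_k}`. -/
theorem OS_local_resolvent_Hm1 :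
    ∃ ε₀ ν₀ C : ℝ, 0 < ε₀ ∧ ε₀ < 1 ∧ 0 < ν₀ ∧ ν₀ < 1 ∧ 0 < C ∧
      ∀ (ν ε lam : ℝ) (k₁ k₃ : ℤ) (w F₁ : ℝ → ℂ),
        0 < ν → ν ≤ ν₀ → 0 < ε → ε ≤ ε₀ → 1 ≤ |k₁| →
        IntervalIntegrable (fun y => ‖F₁ y‖ ^ 2) MeasureTheory.volume (-1) 1 →
        OSlocal ν k₁ k₃ lam ε w F₁ →
        ν * hk k₁ k₃ w + ν ^ ((3:ℝ)/4) * |(k₁ : ℝ)| ^ ((1:ℝ)/4) * l2 w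
          ≤ C * hm1 k₁ k₃ F₁ :=
  ⟨1 / 6000, 1 / 2, 100, by norm_num, by norm_num, by norm_num, by norm_num, by norm_num,
    fun _ _ _ _ _ _ _ hν _ _ hε hk₁ _ h ↦
      OS_local_resolvent_Hm1_general hν hε (by rintro rfl; norm_num at hk₁) h⟩

end
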